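/- Let γ > 0, let X and ε be independent random variables with X ~ Cauchy(0, γ) and ε ~ Cauchy(0, 1), and let ξ be a nonzero real number. Then the random variable −1/X + ξ·ε is distributed as Cauchy(0, 1/γ + |ξ|). -/

import Mathlib

open Real MeasureTheory ProbabilityTheory

/-- The Cauchy distribution with location `x₀` and scale `γ`, given by its density
`x ↦ 1/(π·γ·(1 + ((x − x₀)/γ)^2))` with respect to Lebesgue measure. -/
noncomputable def cauchyDist (x₀ γ : ℝ) : Measure ℝ :=
  volume.withDensity fun x =>
    ENNReal.ofReal (1 / (Real.pi * γ * (1 + ((x - x₀) / γ) ^ 2)))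

/-!
Cauchy laws have characteristic function `t ↦ exp (i x₀ t - γ |t|)`, because `x ↦ exp (-2π|x|)` has
Fourier transform `w ↦ 1 / (π (1 + w ^ 2))`, which Fourier inversion turns around. Hence locations
and scales add under convolution, and `x ↦ c * x` multiplies the location by `c` and the scale by
`|c|`. The map `x ↦ -x⁻¹` also permutes the Cauchy laws: identifying a law with the point
`x₀ + iγ` of the upper half-plane, it acts as the Möbius transformation `z ↦ -1/z`.
-/

section

open scoped NNReal ENNReal FourierTransform RealInnerProductSpace

theorem map_withDensity_of_hasDerivWithinAt {f f' : ℝ → ℝ} {s : Set ℝ} {p q : ℝ → ℝ≥0∞}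
    (hf : Measurable f) (hs : MeasurableSet s) (hs_ae : s =ᵐ[volume] Set.univ)
    (himage : f '' s =ᵐ[volume] Set.univ) (hderiv : ∀ x ∈ s, HasDerivWithinAt f (f' x) s x)
    (hinj : Set.InjOn f s) (hpq : ∀ x ∈ s, p x = ENNReal.ofReal |f' x| * q (f x)) :
    (volume.withDensity p).map f = volume.withDensity q := by
  ext A hA
  have hpull : ∀ x ∈ s,
      (f ⁻¹' A).indicator p x = ENNReal.ofReal |f' x| * A.indicator q (f x) := by
    intro x hx
    by_cases hxA : f x ∈ A
    · rw [Set.indicator_of_mem (Set.mem_preimage.mpr hxA), Set.indicator_of_mem hxA, hpq x hx]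
    · rw [Set.indicator_of_notMem (Set.mem_preimage.not.mpr hxA), Set.indicator_of_notMem hxA,
        mul_zero]
  calc (volume.withDensity p).map f A
      = ∫⁻ x, (f ⁻¹' A).indicator p x := by
        rw [Measure.map_apply hf hA, withDensity_apply _ (hf hA), lintegral_indicator (hf hA)]
    _ = ∫⁻ x in s, (f ⁻¹' A).indicator p x := by
        rw [setLIntegral_congr hs_ae, setLIntegral_univ]
    _ = ∫⁻ x in s, ENNReal.ofReal |f' x| * A.indicator q (f x) :=
        setLIntegral_congr_fun hs hpull
    _ = ∫⁻ y in f '' s, A.indicator q y :=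
        (lintegral_image_eq_lintegral_abs_deriv_mul hs hderiv hinj _).symm
    _ = ∫⁻ y, A.indicator q y := by
        rw [setLIntegral_congr himage, setLIntegral_univ]
    _ = volume.withDensity q A := by
        rw [lintegral_indicator hA, withDensity_apply _ hA]

theorem charFun_withDensity_of_fourier_eq {V : Type*} [NormedAddCommGroup V]
    [InnerProductSpace ℝ V] [FiniteDimensional ℝ V] [MeasurableSpace V] [BorelSpace V]
    {f : V → ℂ} {p : V → ℝ} (hf : Continuous f) (hf_int : Integrable f)
    (hp_nonneg : 0 ≤ p) (hp_int : Integrable p) (hfp : ∀ v, 𝓕 f v = p v) (t : V) :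
    charFun (volume.withDensity fun v ↦ ENNReal.ofReal (p v)) t = f ((2 * π)⁻¹ • t) := by
  have hfourier : 𝓕 f = fun v ↦ (p v : ℂ) := funext hfp
  have hinv : 𝓕⁻ (𝓕 f) = f := hf.fourierInv_fourier_eq hf_int (hfourier ▸ hp_int.ofReal)
  conv_rhs => rw [← hinv, hfourier]
  rw [Real.fourierInv_eq', charFun_apply,
    integral_withDensity_eq_integral_toReal_smul₀ hp_int.aemeasurable.ennreal_ofReal (by simp)]
  congr with v
  rw [ENNReal.toReal_ofReal (hp_nonneg v), Complex.real_smul, smul_eq_mul, mul_comm,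
    inner_smul_right, mul_inv_cancel_left₀ (by positivity)]

theorem eqOn_cexp_mul_sub_mul_abs_Ioi (a c : ℂ) :
    Set.EqOn (fun x : ℝ ↦ Complex.exp (a * x - c * |x|)) (fun x : ℝ ↦ Complex.exp ((a - c) * x))
      (Set.Ioi 0) := fun x hx ↦ by
  simp only [abs_of_pos (Set.mem_Ioi.mp hx), sub_mul]

theorem eqOn_cexp_mul_sub_mul_abs_Iic (a c : ℂ) :
    Set.EqOn (fun x : ℝ ↦ Complex.exp (a * x - c * |x|)) (fun x : ℝ ↦ Complex.exp ((a + c) * x))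
      (Set.Iic 0) := fun x hx ↦ by
  simp only [abs_of_nonpos (Set.mem_Iic.mp hx), Complex.ofReal_neg, mul_neg, sub_neg_eq_add,
    add_mul]

theorem integrableOn_cexp_mul_sub_mul_abs_Ioi {a c : ℂ} (h : a.re < c.re) :
    IntegrableOn (fun x : ℝ ↦ Complex.exp (a * x - c * |x|)) (Set.Ioi 0) :=
  (integrableOn_exp_mul_complex_Ioi (by simpa using h) 0).congr_fun
    (eqOn_cexp_mul_sub_mul_abs_Ioi a c).symm measurableSet_Ioi

theorem integrableOn_cexp_mul_sub_mul_abs_Iic {a c : ℂ} (h : -a.re < c.re) :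
    IntegrableOn (fun x : ℝ ↦ Complex.exp (a * x - c * |x|)) (Set.Iic 0) :=
  (integrableOn_exp_mul_complex_Iic (by simpa using neg_lt_iff_pos_add'.mp h) 0).congr_fun
    (eqOn_cexp_mul_sub_mul_abs_Iic a c).symm measurableSet_Iic

theorem integrable_cexp_mul_sub_mul_abs {a c : ℂ} (h : |a.re| < c.re) :
    Integrable fun x : ℝ ↦ Complex.exp (a * x - c * |x|) := by
  obtain ⟨hneg, hpos⟩ := abs_lt.mp h
  rw [← integrableOn_univ, ← Set.Iic_union_Ioi (a := (0 : ℝ))]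
  exact (integrableOn_cexp_mul_sub_mul_abs_Iic (neg_lt.mp hneg)).union
    (integrableOn_cexp_mul_sub_mul_abs_Ioi hpos)

theorem integral_cexp_mul_sub_mul_abs {a c : ℂ} (h : |a.re| < c.re) :
    ∫ x : ℝ, Complex.exp (a * x - c * |x|) = 2 * c / (c ^ 2 - a ^ 2) := by
  obtain ⟨hneg, hpos⟩ := abs_lt.mp h
  have hadd_re : 0 < (a + c).re := by rw [Complex.add_re]; linarith
  have hsub_re : (a - c).re < 0 := by rw [Complex.sub_re]; linarith
  have hadd : a + c ≠ 0 := fun h0 ↦ by simp [h0] at hadd_re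
  have hsub : a - c ≠ 0 := fun h0 ↦ by simp [h0] at hsub_re
  have hmul : c ^ 2 - a ^ 2 ≠ 0 := by
    rw [← neg_ne_zero, neg_sub, sq_sub_sq]; exact mul_ne_zero hadd hsub
  calc ∫ x : ℝ, Complex.exp (a * x - c * |x|)
      = (∫ x : ℝ in Set.Iic 0, Complex.exp ((a + c) * x))
          + ∫ x : ℝ in Set.Ioi 0, Complex.exp ((a - c) * x) := by
        rw [← intervalIntegral.integral_Iic_add_Ioi (b := 0)
            (integrableOn_cexp_mul_sub_mul_abs_Iic (neg_lt.mp hneg))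
            (integrableOn_cexp_mul_sub_mul_abs_Ioi hpos),
          setIntegral_congr_fun measurableSet_Iic (eqOn_cexp_mul_sub_mul_abs_Iic a c),
          setIntegral_congr_fun measurableSet_Ioi (eqOn_cexp_mul_sub_mul_abs_Ioi a c)]
    _ = 1 / (a + c) + -1 / (a - c) := by
        simp [integral_exp_mul_complex_Iic hadd_re, integral_exp_mul_complex_Ioi hsub_re]
    _ = 2 * c / (c ^ 2 - a ^ 2) := by
        rw [div_add_div _ _ hadd hsub, div_eq_div_iff (mul_ne_zero hadd hsub) hmul]
        ring

theorem fourier_cexp_neg_mul_abs {c : ℂ} (hc : 0 < c.re) (w : ℝ) :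
    𝓕 (fun x : ℝ ↦ Complex.exp (-c * |x|)) w = 2 * c / (c ^ 2 + (2 * π * w) ^ 2) := by
  have hre : |(-(2 * π * w) * Complex.I : ℂ).re| < c.re := by simpa using hc
  calc 𝓕 (fun x : ℝ ↦ Complex.exp (-c * |x|)) w
      = ∫ x : ℝ, Complex.exp (-(2 * π * w) * Complex.I * x - c * |x|) := by
        rw [Real.fourier_real_eq_integral_exp_smul]
        congr with x
        rw [smul_eq_mul, ← Complex.exp_add]
        push_cast
        ring_nf
    _ = 2 * c / (c ^ 2 + (2 * π * w) ^ 2) := by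
        rw [integral_cexp_mul_sub_mul_abs hre, mul_pow _ Complex.I, Complex.I_sq]
        ring_nf

theorem cauchyPDFReal_zero_one_eq_mul (x₀ : ℝ) {γ : ℝ≥0} (hγ : γ ≠ 0) (x : ℝ) :
    cauchyPDFReal 0 1 x = γ * cauchyPDFReal x₀ γ (x₀ + γ * x) := by
  simp only [cauchyPDFReal_def, NNReal.coe_one, mul_one, sub_zero, one_pow, add_sub_cancel_left]
  field_simp

theorem cauchyMeasure_zero_one_map_affine (x₀ : ℝ) (γ : ℝ≥0) :
    (cauchyMeasure 0 1).map (fun x ↦ x₀ + γ * x) = cauchyMeasure x₀ γ := by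
  obtain rfl | hγ := eq_or_ne γ 0
  · simp
  have hsurj : (fun x : ℝ ↦ x₀ + γ * x) '' Set.univ = Set.univ :=
    Set.image_univ_of_surjective fun y ↦ ⟨(y - x₀) / γ, by field_simp; ring⟩
  have hderiv (x : ℝ) : HasDerivAt (fun x : ℝ ↦ x₀ + γ * x) γ x := by
    simpa using ((hasDerivAt_id' x).const_mul (γ : ℝ)).const_add x₀
  rw [cauchyMeasure_of_scale_ne_zero _ one_ne_zero, cauchyMeasure_of_scale_ne_zero _ hγ]
  refine map_withDensity_of_hasDerivWithinAt (by fun_prop) .univ .rfl (.of_eq hsurj)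
    (fun x _ ↦ (hderiv x).hasDerivWithinAt) (fun x _ y _ ↦ by simp [hγ]) fun x _ ↦ ?_
  rw [cauchyPDF_def, cauchyPDF_def, ← ENNReal.ofReal_mul (abs_nonneg _), NNReal.abs_eq,
    cauchyPDFReal_zero_one_eq_mul x₀ hγ]

theorem charFun_cauchyMeasure_zero_one (t : ℝ) :
    charFun (cauchyMeasure 0 1) t = Complex.exp (-|t|) := by
  have hre : 0 < ((2 * π : ℝ) : ℂ).re := by simpa using pi_pos
  have hcont : Continuous fun x : ℝ ↦ Complex.exp (-(2 * π : ℝ) * |x|) := by fun_prop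
  have hint : Integrable fun x : ℝ ↦ Complex.exp (-(2 * π : ℝ) * |x|) := by
    simpa using integrable_cexp_mul_sub_mul_abs (a := 0) (by simpa using hre)
  have hfourier (w : ℝ) : 𝓕 (fun x : ℝ ↦ Complex.exp (-(2 * π : ℝ) * |x|)) w
      = cauchyPDFReal 0 1 w := by
    rw [fourier_cexp_neg_mul_abs hre, cauchyPDFReal_def]
    norm_cast
    simp only [mul_one, sub_zero, one_pow, Nat.cast_one]
    field_simp
    ring
  rw [cauchyMeasure_of_scale_ne_zero _ one_ne_zero]
  refine (charFun_withDensity_of_fourier_eq hcont hint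
    (fun x ↦ (cauchyPDF_pos 0 one_ne_zero x).le) (integrable_cauchyPDFReal 0) hfourier t).trans ?_
  norm_cast
  rw [smul_eq_mul, abs_mul, abs_of_pos (by positivity), neg_mul,
    mul_inv_cancel_left₀ (by positivity)]

theorem charFun_cauchyMeasure (x₀ : ℝ) (γ : ℝ≥0) (t : ℝ) :
    charFun (cauchyMeasure x₀ γ) t = Complex.exp (x₀ * t * Complex.I - γ * |t|) := by
  have hcomp : (cauchyMeasure 0 1).map (fun x ↦ x₀ + γ * x)
      = ((cauchyMeasure 0 1).map ((γ : ℝ) * ·)).map (x₀ + ·) :=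
    (Measure.map_map (by fun_prop) (by fun_prop)).symm
  rw [← cauchyMeasure_zero_one_map_affine, hcomp, charFun_map_const_add, charFun_map_mul,
    charFun_cauchyMeasure_zero_one, ← Complex.exp_add, abs_mul, NNReal.abs_eq]
  simp only [RCLike.inner_apply, conj_trivial]
  push_cast
  ring_nf

theorem cauchyMeasure_conv_cauchyMeasure (x₀ y₀ : ℝ) (γ δ : ℝ≥0) :
    cauchyMeasure x₀ γ ∗ cauchyMeasure y₀ δ = cauchyMeasure (x₀ + y₀) (γ + δ) := by
  refine Measure.ext_of_charFun (funext fun t ↦ ?_)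
  simp only [charFun_conv, charFun_cauchyMeasure, ← Complex.exp_add]
  push_cast
  ring_nf

theorem cauchyMeasure_map_const_mul (x₀ : ℝ) (γ : ℝ≥0) (c : ℝ) :
    (cauchyMeasure x₀ γ).map (c * ·) = cauchyMeasure (c * x₀) (‖c‖₊ * γ) := by
  have : IsProbabilityMeasure ((cauchyMeasure x₀ γ).map (c * ·)) :=
    Measure.isProbabilityMeasure_map (by fun_prop)
  refine Measure.ext_of_charFun (funext fun t ↦ ?_)
  rw [charFun_map_mul, charFun_cauchyMeasure, charFun_cauchyMeasure, abs_mul]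
  simp only [Complex.ofReal_mul, NNReal.coe_mul, coe_nnnorm, norm_eq_abs]
  ring_nf

theorem image_neg_inv_compl_zero : (fun x : ℝ ↦ -x⁻¹) '' {0}ᶜ = {0}ᶜ := by
  ext y
  refine ⟨?_, fun hy ↦ ⟨-y⁻¹, by simpa using hy, by simp⟩⟩
  rintro ⟨x, hx, rfl⟩
  simpa using hx

theorem cauchyPDFReal_eq_inv_sq_mul_neg_inv (x₀ : ℝ) {γ : ℝ≥0} (hγ : γ ≠ 0) {x : ℝ} (hx : x ≠ 0) :
    cauchyPDFReal x₀ γ x = (x ^ 2)⁻¹ *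
      cauchyPDFReal (-x₀ / (x₀ ^ 2 + γ ^ 2)) (γ / (‖x₀‖₊ ^ 2 + γ ^ 2)) (-x⁻¹) := by
  simp only [cauchyPDFReal_def, NNReal.coe_div, NNReal.coe_add, NNReal.coe_pow, coe_nnnorm,
    norm_eq_abs, sq_abs]
  field_simp
  ring

-- At `x₀ = 0`, `γ = 0` both sides are `dirac 0`, as `0⁻¹ = 0` and `0 / 0 = 0`.
theorem cauchyMeasure_map_neg_inv (x₀ : ℝ) (γ : ℝ≥0) :
    (cauchyMeasure x₀ γ).map (fun x ↦ -x⁻¹) =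
      cauchyMeasure (-x₀ / (x₀ ^ 2 + γ ^ 2)) (γ / (‖x₀‖₊ ^ 2 + γ ^ 2)) := by
  obtain rfl | hγ := eq_or_ne γ 0
  · simp [Measure.map_dirac, sq, neg_div, div_self_mul_self']
  have hcompl : ({0}ᶜ : Set ℝ) =ᵐ[volume] Set.univ := by simp [ae_eq_univ]
  have hderiv : ∀ x ∈ ({0}ᶜ : Set ℝ),
      HasDerivWithinAt (fun x : ℝ ↦ -x⁻¹) (x ^ 2)⁻¹ {0}ᶜ x := fun x hx ↦ by
    simpa using (hasDerivAt_inv hx).fun_neg.hasDerivWithinAt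
  have hscale : γ / (‖x₀‖₊ ^ 2 + γ ^ 2) ≠ 0 := by positivity
  rw [cauchyMeasure_of_scale_ne_zero _ hγ, cauchyMeasure_of_scale_ne_zero _ hscale]
  refine map_withDensity_of_hasDerivWithinAt (by fun_prop) (measurableSet_singleton 0).compl hcompl
    (by rwa [image_neg_inv_compl_zero]) hderiv (fun x _ y _ h ↦ by simpa using h) fun x hx ↦ ?_
  rw [cauchyPDF_def, cauchyPDF_def, ← ENNReal.ofReal_mul (abs_nonneg _),
    abs_of_nonneg (by positivity), cauchyPDFReal_eq_inv_sq_mul_neg_inv x₀ hγ hx]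

theorem cauchyDist_eq_cauchyMeasure (x₀ : ℝ) {γ : ℝ≥0} (hγ : γ ≠ 0) :
    cauchyDist x₀ γ = cauchyMeasure x₀ γ := by
  rw [cauchyMeasure_of_scale_ne_zero x₀ hγ, cauchyDist]
  congr with x
  rw [cauchyPDF_def, cauchyPDFReal_def', one_div, mul_inv, mul_inv, NNReal.coe_inv]

theorem cauchy_transform_distribution_general {Ω : Type*} {mΩ : MeasurableSpace Ω} {P : Measure Ω}
    {X ε : Ω → ℝ} {x₀ y₀ γ δ : ℝ} (hγ : 0 < γ) (hδ : 0 < δ) (ξ : ℝ) (hindep : IndepFun X ε P)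
    (hX : HasLaw X (cauchyDist x₀ γ) P) (hε : HasLaw ε (cauchyDist y₀ δ) P) :
    HasLaw (fun ω ↦ -(X ω)⁻¹ + ξ * ε ω)
      (cauchyDist (-x₀ / (x₀ ^ 2 + γ ^ 2) + ξ * y₀) (γ / (x₀ ^ 2 + γ ^ 2) + |ξ| * δ)) P := by
  lift γ to ℝ≥0 using hγ.le
  lift δ to ℝ≥0 using hδ.le
  rw [NNReal.coe_pos] at hγ hδ
  rw [cauchyDist_eq_cauchyMeasure x₀ hγ.ne'] at hX
  rw [cauchyDist_eq_cauchyMeasure y₀ hδ.ne'] at hε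
  have hneg_inv := HasLaw.fun_comp { map_eq := cauchyMeasure_map_neg_inv x₀ γ } hX
  have hmul := HasLaw.fun_comp { map_eq := cauchyMeasure_map_const_mul y₀ δ ξ } hε
  have hsum := (hindep.comp (φ := fun x ↦ -x⁻¹) (ψ := (ξ * ·)) (by fun_prop)
    (by fun_prop)).hasLaw_fun_add hneg_inv hmul
  rw [cauchyMeasure_conv_cauchyMeasure, ← cauchyDist_eq_cauchyMeasure _ (by positivity)] at hsum
  simpa using hsum

end

/-- If `X ~ Cauchy(0, γ)` and `ε ~ Cauchy(0, 1)` are independent and `ξ ≠ 0`, then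
`−1/X + ξ·ε` is distributed as `Cauchy(0, 1/γ + |ξ|)`. -/
theorem cauchy_transform_distribution
    {Ω : Type*} [MeasureSpace Ω] [IsProbabilityMeasure (ℙ : Measure Ω)]
    (γ : ℝ) (hγ : 0 < γ) (ξ : ℝ) (hξ : ξ ≠ 0)
    (X ε : Ω → ℝ) (hXm : Measurable X) (hεm : Measurable ε)
    (hindep : IndepFun X ε ℙ)
    (hX : Measure.map X ℙ = cauchyDist 0 γ)
    (hε : Measure.map ε ℙ = cauchyDist 0 1) :
    Measure.map (fun ω => -(1 / X ω) + ξ * ε ω) ℙ = cauchyDist 0 (1 / γ + |ξ|) := by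
  simpa [sq, div_self_mul_self'] using
    (cauchy_transform_distribution_general hγ one_pos ξ hindep ⟨hXm.aemeasurable, hX⟩
      ⟨hεm.aemeasurable, hε⟩).map_eq
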